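/- Let C be a cartesian category, p : E → B an arrow, P : C → C a pullback-preserving endofunctor, leg_X : PX → B natural, subst_X : PX ×_B E → X natural, and suppose η_Y : Y → P(Y ×_B E) (for Y ∈ C/B) is a natural transformation making (P, leg) : C → C/B a right adjoint of (− ×_B E) : C/B → C with unit η and counit subst. Define wk_X = P(π₁) ∘ η_{X×B} (via (X × B) ×_B E ≅ X × E) and proj = η_B (via B ×_B E ≅ E). Then for every object (f : Y → B) of C/B, the unit component η_Y satisfies P(π₁) ∘ η_Y = wk_Y ∘ (id_Y, f) and P(π₂) ∘ η_Y = proj ∘ f; in particular η is uniquely determined by the pair (wk, proj). -/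

import Mathlib

open CategoryTheory CategoryTheory.Limits

universe v u

variable {C : Type u} [Category.{v} C]



/-- The functor `(P, leg) : C ⥤ C/B` determined by an endofunctor `P : C ⥤ C` and a natural
transformation `leg_X : P X ⟶ B`. -/
@[simps]
def legFunctor {B : C} (P : C ⥤ C) (leg : ∀ X : C, P.obj X ⟶ B)
    (hleg : ∀ (X Y : C) (f : X ⟶ Y), P.map f ≫ leg Y = leg X) : C ⥤ Over B where
  obj X := Over.mk (leg X)
  map {X Y} f := Over.homMk (P.map f) (hleg X Y f)

/-- The property that a family `η_Y : Y ⟶ P (Y ×_B E)` (for `Y ∈ C/B`) is a natural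
transformation making `(P, leg) : C ⥤ C/B` a right adjoint of `(− ×_B E) : C/B ⥤ C` with
unit `η` and counit `subst`: each `η_Y` is a morphism over `B`, `η` is natural in `Y`, and
the two triangle identities hold.  In the second triangle identity, the morphism
`η_Y ×_B E : Y ×_B E ⟶ P (Y ×_B E) ×_B E` is characterized by its compositions with the two
pullback projections. -/
structure IsAdjointUnit [HasFiniteLimits C] {E B : C} (p : E ⟶ B)
    (P : C ⥤ C) (leg : ∀ X : C, P.obj X ⟶ B) (subst : ∀ X : C, pullback (leg X) p ⟶ X)
    (η : ∀ Y : Over B, Y.left ⟶ P.obj (pullback Y.hom p)) : Prop where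
  /-- Each `η_Y` is a morphism `Y ⟶ (P (Y ×_B E), leg)` in `C/B`. -/
  over_base : ∀ Y : Over B, η Y ≫ leg (pullback Y.hom p) = Y.hom
  /-- `η` is natural in `Y ∈ C/B`. -/
  natural : ∀ (Y Z : Over B) (f : Y ⟶ Z),
    f.left ≫ η Z = η Y ≫ P.map ((Over.pullback p ⋙ Over.forget E).map f)
  /-- First triangle identity: `P (subst_X) ∘ η_{(P X, leg_X)} = id_{P X}`. -/
  triangle₁ : ∀ X : C, η (Over.mk (leg X)) ≫ P.map (subst X) = 𝟙 (P.obj X)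
  /-- Second triangle identity: `subst_{Y ×_B E} ∘ (η_Y ×_B E) = id_{Y ×_B E}`. -/
  triangle₂ : ∀ (Y : Over B)
    (u : pullback Y.hom p ⟶ pullback (leg (pullback Y.hom p)) p),
    u ≫ pullback.fst (leg (pullback Y.hom p)) p = pullback.fst Y.hom p ≫ η Y →
    u ≫ pullback.snd (leg (pullback Y.hom p)) p = pullback.snd Y.hom p →
    u ≫ subst (pullback Y.hom p) = 𝟙 (pullback Y.hom p)

/-- Given a family `η_Y : Y ⟶ P (Y ×_B E)`, the induced arrow `wk_X = P(π₁) ∘ η_{X×B}`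
(via the isomorphism `(X × B) ×_B E ≅ X × E`, under which `P π₁` corresponds to `P` applied
to the composite of the first pullback projection with the first product projection). -/
noncomputable def wkOfUnit [HasFiniteLimits C] {E B : C} (p : E ⟶ B) (P : C ⥤ C)
    (η : ∀ Y : Over B, Y.left ⟶ P.obj (pullback Y.hom p)) (X : C) :
    X ⨯ B ⟶ P.obj X :=
  η (Over.mk (prod.snd : X ⨯ B ⟶ B)) ≫
    P.map (pullback.fst (Over.mk (prod.snd : X ⨯ B ⟶ B)).hom p ≫ prod.fst)

/-- Given a family `η_Y : Y ⟶ P (Y ×_B E)`, the induced arrow `proj = η_B` followed by the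
isomorphism `B ×_B E ≅ E` (the second pullback projection). -/
noncomputable def projOfUnit [HasFiniteLimits C] {E B : C} (p : E ⟶ B) (P : C ⥤ C)
    (η : ∀ Y : Over B, Y.left ⟶ P.obj (pullback Y.hom p)) :
    B ⟶ P.obj E :=
  η (Over.mk (𝟙 B)) ≫ P.map (pullback.snd (Over.mk (𝟙 B)).hom p)

/-- Let `C` be a cartesian category, `p : E ⟶ B` an arrow, `P : C ⥤ C` a
pullback-preserving endofunctor, `leg_X : P X ⟶ B` natural, `subst_X : P X ×_B E ⟶ X`
natural, and suppose `η_Y : Y ⟶ P (Y ×_B E)` (for `Y ∈ C/B`) is a natural transformation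
making `(P, leg) : C ⥤ C/B` a right adjoint of `(− ×_B E) : C/B ⥤ C` with unit `η` and
counit `subst`.  Define `wk_X = P(π₁) ∘ η_{X×B}` (via `(X × B) ×_B E ≅ X × E`) and
`proj = η_B` (via `B ×_B E ≅ E`).  Then for every object `(f : Y ⟶ B)` of `C/B` the unit
component `η_Y` satisfies `P(π₁) ∘ η_Y = wk_Y ∘ (id_Y, f)` and `P(π₂) ∘ η_Y = proj ∘ f`;
in particular `η` is uniquely determined by the pair `(wk, proj)`. -/
theorem unit_determined_by_wk_proj
    {C : Type u} [Category.{v} C] [HasFiniteLimits C] {E B : C} (p : E ⟶ B)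
    (P : C ⥤ C) (hP : PreservesLimitsOfShape WalkingCospan P)
    (leg : ∀ X : C, P.obj X ⟶ B)
    (hleg : ∀ (X Y : C) (f : X ⟶ Y), P.map f ≫ leg Y = leg X)
    (subst : ∀ X : C, pullback (leg X) p ⟶ X)
    (hsubst : ∀ (X Y : C) (f : X ⟶ Y) (u : pullback (leg X) p ⟶ pullback (leg Y) p),
      u ≫ pullback.fst (leg Y) p = pullback.fst (leg X) p ≫ P.map f →
      u ≫ pullback.snd (leg Y) p = pullback.snd (leg X) p →
      u ≫ subst Y = subst X ≫ f)
    (η : ∀ Y : Over B, Y.left ⟶ P.obj (pullback Y.hom p))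
    (hη : IsAdjointUnit p P leg subst η) :
    (∀ Y : Over B,
      η Y ≫ P.map (pullback.fst Y.hom p) =
        prod.lift (𝟙 Y.left) Y.hom ≫ wkOfUnit p P η Y.left ∧
      η Y ≫ P.map (pullback.snd Y.hom p) = Y.hom ≫ projOfUnit p P η) ∧
    (∀ η' : ∀ Y : Over B, Y.left ⟶ P.obj (pullback Y.hom p),
      IsAdjointUnit p P leg subst η' →
      (∀ X : C, wkOfUnit p P η' X = wkOfUnit p P η X) →
      projOfUnit p P η' = projOfUnit p P η → η' = η) := by
  have key : ∀ η₁ : ∀ Y : Over B, Y.left ⟶ P.obj (pullback Y.hom p),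
      IsAdjointUnit p P leg subst η₁ → ∀ Y : Over B,
      η₁ Y ≫ P.map (pullback.fst Y.hom p) =
        prod.lift (𝟙 Y.left) Y.hom ≫ wkOfUnit p P η₁ Y.left ∧
      η₁ Y ≫ P.map (pullback.snd Y.hom p) = Y.hom ≫ projOfUnit p P η₁ := by
    intro η₁ h Y
    have nat : ∀ (Z : Over B) (f : Y ⟶ Z), ∃ k : pullback Y.hom p ⟶ pullback Z.hom p,
        k ≫ pullback.fst Z.hom p = pullback.fst Y.hom p ≫ f.left ∧
        k ≫ pullback.snd Z.hom p = pullback.snd Y.hom p ∧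
        f.left ≫ η₁ Z = η₁ Y ≫ P.map k := by
      intro Z f
      exact ⟨(Over.pullback p ⋙ Over.forget E).map f, pullback.lift_fst _ _ _,
        pullback.lift_snd _ _ _, h.natural Y Z f⟩
    constructor
    · obtain ⟨k, h1, -, n⟩ := nat (Over.mk (prod.snd : Y.left ⨯ B ⟶ B))
        (Over.homMk (prod.lift (𝟙 Y.left) Y.hom) (prod.lift_snd _ _))
      replace n : prod.lift (𝟙 Y.left) Y.hom ≫
        η₁ (Over.mk (prod.snd : Y.left ⨯ B ⟶ B)) = η₁ Y ≫ P.map k := n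
      replace h1 : k ≫ pullback.fst (Over.mk (prod.snd : Y.left ⨯ B ⟶ B)).hom p =
        pullback.fst Y.hom p ≫ prod.lift (𝟙 Y.left) Y.hom := h1
      have h2 : k ≫ (pullback.fst (Over.mk (prod.snd : Y.left ⨯ B ⟶ B)).hom p ≫ prod.fst) =
          pullback.fst Y.hom p := by
        refine (Category.assoc _ _ _).symm.trans ?_
        refine (congrArg (· ≫ (prod.fst : Y.left ⨯ B ⟶ Y.left)) h1).trans ?_
        refine (Category.assoc _ _ _).trans ?_
        exact (congrArg (pullback.fst Y.hom p ≫ ·) (prod.lift_fst _ _)).trans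
          (Category.comp_id _)
      unfold wkOfUnit
      refine Eq.trans ?_ (Category.assoc _ _ _)
      refine Eq.trans ?_ (congrArg (· ≫ P.map (pullback.fst (Over.mk
        (prod.snd : Y.left ⨯ B ⟶ B)).hom p ≫ prod.fst)) n.symm)
      refine Eq.trans ?_ (Category.assoc _ _ _).symm
      refine congrArg (η₁ Y ≫ ·) ?_
      exact (congrArg P.map h2.symm).trans (P.map_comp _ _)
    · obtain ⟨k, -, h2, n⟩ := nat (Over.mk (𝟙 B)) (Over.homMk Y.hom (Category.comp_id _))
      replace n : Y.hom ≫ η₁ (Over.mk (𝟙 B)) = η₁ Y ≫ P.map k := n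
      unfold projOfUnit
      refine Eq.trans ?_ (Category.assoc _ _ _)
      refine Eq.trans ?_ (congrArg (· ≫ P.map (pullback.snd (Over.mk (𝟙 B)).hom p)) n.symm)
      refine Eq.trans ?_ (Category.assoc _ _ _).symm
      refine congrArg (η₁ Y ≫ ·) ?_
      exact (congrArg P.map h2.symm).trans (P.map_comp _ _)
  refine ⟨key η hη, fun η' hη' hwk hproj => funext fun Y => ?_⟩
  have a := key η hη Y
  have b := key η' hη' Y
  have hpb := (IsPullback.of_hasPullback Y.hom p).map P
  apply hpb.hom_ext
  · rw [a.1, b.1, hwk]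
  · rw [a.2, b.2, hproj]
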